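/- arXiv:2205.14027 — 2 statements merged into one kernel-verified Lean document; each statement's English description precedes it below -/
import Mathlib

section
/- Let p be a Markov transition kernel on (X, Σ) with invariant probability measure π, A_π the associated Koopman operator on L²(X, π), and ρ(dx,dy) = π(dx) p(x,dy). Let H be a separable Hilbert space, S : H → L²(X, π) a Hilbert–Schmidt operator, and G : H → H a Hilbert–Schmidt operator. Then for every Hilbert (orthonormal) basis (h_i)_{i∈ℕ} of H, Σ_{i∈ℕ} ∫_{X×X} ((S h_i)(y) − (S G h_i)(x))² ρ(dx,dy) = ‖S‖²_HS − ‖A_π ∘ S‖²_HS + ‖A_π ∘ S − S ∘ G‖²_HS (where the evaluations use any measurable representatives of the L² classes; both marginals of ρ equal π, so the integrals are well defined). -/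
open MeasureTheory ProbabilityTheory
open scoped ProbabilityTheory

theorem stmt2_aux {X : Type*} [MeasurableSpace X]
    (p : Kernel X X) [IsMarkovKernel p]
    (π : Measure X) [IsProbabilityMeasure π]
    (hinv : ∀ B : Set X, MeasurableSet B → π B = ∫⁻ x, p x B ∂π)
    (A : Lp ℝ 2 π →L[ℝ] Lp ℝ 2 π)
    (hA : ∀ f : Lp ℝ 2 π, (A f : X → ℝ) =ᵐ[π] fun x => ∫ y, f y ∂(p x))
    (f g : Lp ℝ 2 π) :
    ∫ z : X × X, ((f : X → ℝ) z.2 - (g : X → ℝ) z.1) ^ 2 ∂(π ⊗ₘ p)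
      = ‖f‖ ^ 2 - ‖A f‖ ^ 2 + ‖A f - g‖ ^ 2 := by
  have h1 : MeasurePreserving (Prod.fst : X × X → X) (π ⊗ₘ p) π :=
    ⟨measurable_fst, Measure.fst_compProd π p⟩
  have h2 : MeasurePreserving (Prod.snd : X × X → X) (π ⊗ₘ p) π := by
    refine ⟨measurable_snd, ?_⟩
    have := Measure.snd_compProd π p
    rw [Measure.snd] at this
    rw [this]
    ext B hB
    rw [Measure.bind_apply hB p.aemeasurable, hinv B hB]
  have hf := (Lp.memLp f).comp_measurePreserving h2
  have hg := (Lp.memLp g).comp_measurePreserving h1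
  have nrm : ∀ k : Lp ℝ 2 π, ∫ x, (k x) ^ 2 ∂π = ‖k‖ ^ 2 := by
    intro k
    rw [← real_inner_self_eq_norm_sq, L2.inner_def]
    simp [sq]
  have ef : ∫ z : X × X, (f z.2) ^ 2 ∂(π ⊗ₘ p) = ‖f‖ ^ 2 := by
    rw [← nrm f]
    have := integral_map (μ := π ⊗ₘ p) (φ := Prod.snd) measurable_snd.aemeasurable
      (f := fun x => (f x) ^ 2) (by rw [h2.map_eq]; exact (Lp.aestronglyMeasurable f).pow 2)
    rw [h2.map_eq] at this
    exact this.symm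
  have eg : ∫ z : X × X, (g z.1) ^ 2 ∂(π ⊗ₘ p) = ‖g‖ ^ 2 := by
    rw [← nrm g]
    have := integral_map (μ := π ⊗ₘ p) (φ := Prod.fst) measurable_fst.aemeasurable
      (f := fun x => (g x) ^ 2) (by rw [h1.map_eq]; exact (Lp.aestronglyMeasurable g).pow 2)
    rw [h1.map_eq] at this
    exact this.symm
  have ifg : Integrable (fun z : X × X => f z.2 * g z.1) (π ⊗ₘ p) := hf.integrable_mul hg
  have efg : ∫ z : X × X, f z.2 * g z.1 ∂(π ⊗ₘ p) = inner ℝ (A f) g := by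
    rw [Measure.integral_compProd ifg, L2.inner_def]
    refine integral_congr_ae ?_
    filter_upwards [hA f] with x hx
    simp [hx, integral_mul_const, mul_comm]
  have i1 : Integrable (fun z : X × X => (f z.2) ^ 2) (π ⊗ₘ p) := hf.integrable_sq
  have i2 : Integrable (fun z : X × X => (g z.1) ^ 2) (π ⊗ₘ p) := hg.integrable_sq
  have : ∫ z : X × X, (f z.2 - g z.1) ^ 2 ∂(π ⊗ₘ p)
      = ∫ z : X × X, ((f z.2) ^ 2 - 2 * (f z.2 * g z.1) + (g z.1) ^ 2) ∂(π ⊗ₘ p) := by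
    congr 1; ext z; ring
  have i3 : Integrable (fun z : X × X => (f z.2) ^ 2 - 2 * (f z.2 * g z.1)) (π ⊗ₘ p) :=
    i1.sub (ifg.const_mul 2)
  rw [this, integral_add i3 i2, integral_sub i1 (ifg.const_mul 2),
    integral_const_mul, ef, eg, efg, norm_sub_sq_real]
  ring

/-- With `A` the Koopman operator on `L²(X,π)` of a Markov kernel `p` with
invariant measure `π`, `ρ = π ⊗ₘ p`, `S : H → L²(X,π)` Hilbert–Schmidt and `G : H → H`
Hilbert–Schmidt, for every Hilbert basis `(h_i)_{i ∈ ℕ}` of `H`: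
`Σ_i ∫ ((S h_i)(y) − (S G h_i)(x))² dρ = ‖S‖²_HS − ‖A∘S‖²_HS + ‖A∘S − S∘G‖²_HS`
(the HS norms being computed via the basis, equivalently any basis). -/
theorem stmt2 {X : Type*} [MeasurableSpace X]
    (p : Kernel X X) [IsMarkovKernel p]
    (π : Measure X) [IsProbabilityMeasure π]
    (hinv : ∀ B : Set X, MeasurableSet B → π B = ∫⁻ x, p x B ∂π)
    {H : Type*} [NormedAddCommGroup H] [InnerProductSpace ℝ H] [CompleteSpace H]
    (b : HilbertBasis ℕ ℝ H)
    (A : Lp ℝ 2 π →L[ℝ] Lp ℝ 2 π)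
    (hA : ∀ f : Lp ℝ 2 π, (A f : X → ℝ) =ᵐ[π] fun x => ∫ y, f y ∂(p x))
    (S : H →L[ℝ] Lp ℝ 2 π) (hS : Summable fun i => ‖S (b i)‖ ^ 2)
    (G : H →L[ℝ] H) (hG : Summable fun i => ‖G (b i)‖ ^ 2) :
    ∑' i : ℕ, ∫ z : X × X, ((S (b i) : X → ℝ) z.2 - (S (G (b i)) : X → ℝ) z.1) ^ 2 ∂(π ⊗ₘ p)
      = (∑' i : ℕ, ‖S (b i)‖ ^ 2) - (∑' i : ℕ, ‖A (S (b i))‖ ^ 2)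
        + ∑' i : ℕ, ‖A (S (b i)) - S (G (b i))‖ ^ 2 := by
  have hAS : Summable fun i => ‖A (S (b i))‖ ^ 2 := by
    refine Summable.of_nonneg_of_le (fun i => sq_nonneg _) (fun i => ?_) (hS.mul_left (‖A‖ ^ 2))
    rw [← mul_pow]
    exact pow_le_pow_left₀ (norm_nonneg _) (A.le_opNorm _) 2
  have hSG : Summable fun i => ‖S (G (b i))‖ ^ 2 := by
    refine Summable.of_nonneg_of_le (fun i => sq_nonneg _) (fun i => ?_) (hG.mul_left (‖S‖ ^ 2))
    rw [← mul_pow]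
    exact pow_le_pow_left₀ (norm_nonneg _) (S.le_opNorm _) 2
  have hD : Summable fun i => ‖A (S (b i)) - S (G (b i))‖ ^ 2 := by
    refine Summable.of_nonneg_of_le (fun i => sq_nonneg _) (fun i => ?_)
      ((hAS.add hSG).mul_left 2)
    have h := norm_sub_le (A (S (b i))) (S (G (b i)))
    have h' := pow_le_pow_left₀ (norm_nonneg _) h 2
    nlinarith [sq_nonneg (‖A (S (b i))‖ - ‖S (G (b i))‖)]
  simp_rw [stmt2_aux p π hinv A hA]
  rw [(hS.sub hAS).tsum_add hD, hS.tsum_sub hAS]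
end

section
/- Let H and L be separable Hilbert spaces, S : H → L a Hilbert–Schmidt operator, K : L → L a bounded operator, and Z := K ∘ S (which is Hilbert–Schmidt). If range(Z) ⊆ closure(range(S)), then for every δ > 0 there exists a finite-rank, non-defective operator G : H → H such that ‖Z − S ∘ G‖_HS < δ. -/
open MeasureTheory

/-- A finite-rank operator `G` on a Hilbert space is *non-defective* if for some
finite-dimensional `G`-invariant subspace `V` containing `range G`, the restriction of `G`
to `V` is diagonalizable over `ℂ` (the sup of its eigenspaces is everything). -/
def NonDefective {H : Type*} [NormedAddCommGroup H] [InnerProductSpace ℂ H]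
    (G : H →L[ℂ] H) : Prop :=
  ∃ (V : Submodule ℂ H) (_ : FiniteDimensional ℂ V)
    (_ : LinearMap.range (G : H →ₗ[ℂ] H) ≤ V) (hV : ∀ x ∈ V, (G : H →ₗ[ℂ] H) x ∈ V),
    ⨆ μ : ℂ, Module.End.eigenspace (LinearMap.restrict (G : H →ₗ[ℂ] H) hV) μ = ⊤

lemma nonDefective_of_idem {H : Type*} [NormedAddCommGroup H] [InnerProductSpace ℂ H]
    (G : H →L[ℂ] H) (hfin : FiniteDimensional ℂ (LinearMap.range (G : H →ₗ[ℂ] H)))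
    (hG : ∀ x, G (G x) = G x) : NonDefective G := by
  refine ⟨LinearMap.range (G : H →ₗ[ℂ] H), hfin, le_rfl, fun x _ => ⟨x, rfl⟩, ?_⟩
  rw [eq_top_iff]
  refine le_trans ?_ (le_iSup _ (1 : ℂ))
  rintro ⟨x, y, rfl⟩ _
  rw [Module.End.mem_eigenspace_iff, one_smul]
  apply Subtype.ext
  exact hG y

/-- The finite rank operator used in the construction. -/
noncomputable def Gop {H : Type*} [NormedAddCommGroup H] [InnerProductSpace ℂ H]
    (b : ℕ → H) (N M : ℕ) (η : ℝ) (g : ℕ → H) : H →L[ℂ] H :=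
  ∑ k ∈ Finset.range N, (innerSL ℂ (b k) + (η : ℂ) • innerSL ℂ (b (M + k))).smulRight (g k)

lemma Gop_apply {H : Type*} [NormedAddCommGroup H] [InnerProductSpace ℂ H]
    (b : ℕ → H) (N M : ℕ) (η : ℝ) (g : ℕ → H) (x : H) :
    Gop b N M η g x = ∑ k ∈ Finset.range N,
      (inner ℂ (b k) x + (η : ℂ) * inner ℂ (b (M + k)) x) • g k := by
  simp [Gop]

lemma Gop_fin {H : Type*} [NormedAddCommGroup H] [InnerProductSpace ℂ H]
    (b : ℕ → H) (N M : ℕ) (η : ℝ) (g : ℕ → H) :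
    FiniteDimensional ℂ (LinearMap.range (Gop b N M η g : H →ₗ[ℂ] H)) := by
  have hf : FiniteDimensional ℂ (Submodule.span ℂ (g '' (Finset.range N : Set ℕ))) :=
    FiniteDimensional.span_of_finite ℂ ((Finset.finite_toSet _).image g)
  refine Submodule.finiteDimensional_of_le (S₂ := Submodule.span ℂ (g '' (Finset.range N : Set ℕ))) ?_
  rintro _ ⟨x, rfl⟩
  change Gop b N M η g x ∈ _
  rw [Gop_apply]
  exact Submodule.sum_mem _ fun k hk => Submodule.smul_mem _ _
    (Submodule.subset_span ⟨k, hk, rfl⟩)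

lemma Gop_idem {H : Type*} [NormedAddCommGroup H] [InnerProductSpace ℂ H]
    (b : ℕ → H) (N M : ℕ) (η : ℝ) (g : ℕ → H)
    (hg : ∀ k < N, ∀ l < N, inner ℂ (b l) (g k) + (η : ℂ) * inner ℂ (b (M + l)) (g k)
      = if l = k then 1 else 0) (x : H) :
    Gop b N M η g (Gop b N M η g x) = Gop b N M η g x := by
  have h1 : ∀ k < N, Gop b N M η g (g k) = g k := by
    intro k hk
    rw [Gop_apply, Finset.sum_eq_single k]
    · rw [hg k hk k hk]; simp
    · intro l hl hlk
      rw [hg k hk l (Finset.mem_range.1 hl)]; simp [hlk]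
    · intro h; exact absurd (Finset.mem_range.2 hk) h
  conv_lhs => rw [Gop_apply b N M η g x]
  rw [map_sum, Gop_apply]
  refine Finset.sum_congr rfl fun k hk => ?_
  rw [map_smul, h1 k (Finset.mem_range.1 hk)]

lemma Gop_lt {H : Type*} [NormedAddCommGroup H] [InnerProductSpace ℂ H]
    (b : ℕ → H) (hb : Orthonormal ℂ b) (N M : ℕ) (hM : N ≤ M) (η : ℝ) (g : ℕ → H)
    (i : ℕ) (hi : i < N) : Gop b N M η g (b i) = g i := by
  rw [Gop_apply, Finset.sum_eq_single i]
  · have : M + i ≠ i := by omega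
    simp only [orthonormal_iff_ite.1 hb, if_neg this]
    simp
  · intro l hl hlk
    have : M + l ≠ i := by omega
    simp [orthonormal_iff_ite.1 hb, this, hlk]
  · intro h; exact absurd (Finset.mem_range.2 hi) h

lemma Gop_mid {H : Type*} [NormedAddCommGroup H] [InnerProductSpace ℂ H]
    (b : ℕ → H) (hb : Orthonormal ℂ b) (N M : ℕ) (hM : N ≤ M) (η : ℝ) (g : ℕ → H)
    (i : ℕ) (hi : i < N) : Gop b N M η g (b (M + i)) = (η : ℂ) • g i := by
  rw [Gop_apply, Finset.sum_eq_single i]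
  · have : i ≠ M + i := by omega
    simp only [orthonormal_iff_ite.1 hb, if_neg this]
    simp
  · intro l hl hlk
    have h1 := Finset.mem_range.1 hl
    have : l ≠ M + i := by omega
    simp [orthonormal_iff_ite.1 hb, this, hlk]
  · intro h; exact absurd (Finset.mem_range.2 hi) h

lemma Gop_other {H : Type*} [NormedAddCommGroup H] [InnerProductSpace ℂ H]
    (b : ℕ → H) (hb : Orthonormal ℂ b) (N M : ℕ) (η : ℝ) (g : ℕ → H)
    (i : ℕ) (hi : N ≤ i) (hi2 : i < M ∨ M + N ≤ i) : Gop b N M η g (b i) = 0 := by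
  rw [Gop_apply]
  refine Finset.sum_eq_zero fun l hl => ?_
  have h1 := Finset.mem_range.1 hl
  have h2 : l ≠ i := by omega
  have h3 : M + l ≠ i := by omega
  simp [orthonormal_iff_ite.1 hb, h2, h3]

/-- Correcting approximate preimages to obtain biorthogonality. -/
lemma exists_g {H L : Type*}
    [NormedAddCommGroup H] [InnerProductSpace ℂ H]
    [NormedAddCommGroup L] [InnerProductSpace ℂ L]
    (b : ℕ → H) (hb : Orthonormal ℂ b)
    (S : H →L[ℂ] L) (hS : Summable fun i => ‖S (b i)‖ ^ 2)
    (N : ℕ) (h : ℕ → H) (η : ℝ) (hη : 0 < η) (ε : ℝ) (hε : 0 < ε) :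
    ∃ R : ℕ, ∃ g : ℕ → H, (∀ k < N, ‖S (g k) - S (h k)‖ ≤ ε) ∧
      (∀ k < N, ∀ l < N, inner ℂ (b l) (g k) + (η : ℂ) * inner ℂ (b (N + R + l)) (g k)
      = if l = k then 1 else 0) := by
  set B : ℝ := ∑ k ∈ Finset.range N, ‖h k‖ with hB
  have hB0 : 0 ≤ B := Finset.sum_nonneg fun _ _ => norm_nonneg _
  have hBk : ∀ k < N, ‖h k‖ ≤ B := fun k hk =>
    Finset.single_le_sum (f := fun k => ‖h k‖) (fun _ _ => norm_nonneg _) (Finset.mem_range.2 hk)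
  set C : ℝ := (1 + B) / η + B with hC
  have hC0 : 0 < C := by positivity
  set τ : ℝ := ε / (C * (N + 1)) with hτ
  have hτ0 : 0 < τ := by positivity
  have ht := hS.tendsto_atTop_zero
  obtain ⟨R, hR⟩ := Filter.eventually_atTop.1 (ht.eventually_lt_const (show (0:ℝ) < τ ^ 2 by positivity))
  have hR' : ∀ j, R ≤ j → ‖S (b j)‖ ≤ τ := fun j hj =>
    (lt_of_pow_lt_pow_left₀ 2 hτ0.le (hR j hj)).le
  let c : ℕ → ℕ → ℂ := fun k l =>
    ((if l = k then 1 else 0) - inner ℂ (b l) (h k)) / (η : ℂ) - inner ℂ (b (N + R + l)) (h k)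
  have hin : ∀ j k, k < N → ‖inner ℂ (b j) (h k)‖ ≤ B := fun j k hk =>
    (norm_inner_le_norm _ _).trans (by rw [hb.1 j, one_mul]; exact hBk k hk)
  have hc : ∀ k < N, ∀ l, ‖c k l‖ ≤ C := by
    intro k hk l
    refine (norm_sub_le _ _).trans (add_le_add ?_ (hin _ _ hk))
    rw [norm_div, Complex.norm_real, Real.norm_of_nonneg hη.le]
    gcongr
    refine (norm_sub_le _ _).trans (add_le_add ?_ (hin _ _ hk))
    split_ifs <;> simp
  refine ⟨R, fun k => h k + ∑ l ∈ Finset.range N, c k l • b (N + R + l), ?_, ?_⟩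
  · intro k hk
    rw [map_add, add_sub_cancel_left, map_sum]
    calc _ ≤ ∑ l ∈ Finset.range N, ‖S (c k l • b (N + R + l))‖ := norm_sum_le _ _
      _ ≤ ∑ l ∈ Finset.range N, C * τ := by
        refine Finset.sum_le_sum fun l _ => ?_
        rw [map_smul, norm_smul]
        exact mul_le_mul (hc k hk l) (hR' _ (by omega)) (norm_nonneg _) hC0.le
      _ = N * (C * τ) := by simp
      _ ≤ (N + 1) * (C * τ) := by gcongr; linarith
      _ = ε := by rw [hτ]; field_simp
  · intro k hk l hl
    have hη' : (η : ℂ) ≠ 0 := by exact_mod_cast hη.ne'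
    have e1 : inner ℂ (b l) (∑ m ∈ Finset.range N, c k m • b (N + R + m)) = 0 := by
      rw [inner_sum]
      refine Finset.sum_eq_zero fun m _ => ?_
      have : l ≠ N + R + m := by omega
      simp [inner_smul_right, orthonormal_iff_ite.1 hb, this]
    have e2 : inner ℂ (b (N + R + l)) (∑ m ∈ Finset.range N, c k m • b (N + R + m)) = c k l := by
      rw [inner_sum]
      simp [inner_smul_right, orthonormal_iff_ite.1 hb, hl]
    simp only [inner_add_right, e1, e2, c]
    field_simp
    ring

/-- If `S : H → L` is Hilbert–Schmidt, `K : L → L` bounded, `Z := K ∘ S`, and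
`range Z ⊆ closure (range S)`, then for every `δ > 0` there is a finite-rank non-defective
operator `G : H → H` with `‖Z − S∘G‖_HS < δ`. -/
theorem stmt3 {H L : Type*}
    [NormedAddCommGroup H] [InnerProductSpace ℂ H] [CompleteSpace H]
    [NormedAddCommGroup L] [InnerProductSpace ℂ L] [CompleteSpace L]
    (b : HilbertBasis ℕ ℂ H)
    (S : H →L[ℂ] L) (hS : Summable fun i => ‖S (b i)‖ ^ 2)
    (K : L →L[ℂ] L)
    (hrange : Set.range (fun h => K (S h)) ⊆ closure (Set.range S))
    (δ : ℝ) (hδ : 0 < δ) :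
    ∃ G : H →L[ℂ] H,
      FiniteDimensional ℂ (LinearMap.range (G : H →ₗ[ℂ] H)) ∧ NonDefective G ∧
      Summable (fun i => ‖K (S (b i)) - S (G (b i))‖ ^ 2) ∧
      Real.sqrt (∑' i : ℕ, ‖K (S (b i)) - S (G (b i))‖ ^ 2) < δ := by
  have hb : Orthonormal ℂ (fun i => b i) := b.orthonormal
  have hZ : Summable fun i => ‖K (S (b i))‖ ^ 2 := by
    refine Summable.of_nonneg_of_le (fun _ => by positivity) (fun i => ?_) (hS.mul_left (‖K‖ ^ 2))
    rw [← mul_pow]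
    gcongr
    exact K.le_opNorm _
  have hd : 0 < δ ^ 2 / 8 := by positivity
  obtain ⟨N, hN⟩ := ((tendsto_sum_nat_add fun i => ‖K (S (b i))‖ ^ 2).eventually_lt_const hd).exists
  obtain ⟨ε, hε0, hε1, hε2⟩ : ∃ ε : ℝ, 0 < ε ∧ ε ≤ 1 ∧ N * ε ^ 2 < δ ^ 2 / 4 := by
    have : Filter.Tendsto (fun ε : ℝ => N * ε ^ 2) (nhdsWithin 0 (Set.Ioi 0)) (nhds (N * 0 ^ 2)) :=
      ((by fun_prop : Continuous fun ε : ℝ => N * ε ^ 2).tendsto 0).mono_left nhdsWithin_le_nhds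
    have h1 := this.eventually_lt_const (show (N : ℝ) * 0 ^ 2 < δ ^ 2 / 4 by simp; positivity)
    obtain ⟨ε, h1, h2⟩ := (h1.and (Ioc_mem_nhdsGT (zero_lt_one' ℝ))).exists
    exact ⟨ε, h2.1, h2.2, h1⟩
  set T : ℝ := ∑ k ∈ Finset.range N, (‖K (S (b k))‖ + 1) ^ 2 with hT
  have hTk : ∀ k < N, (‖K (S (b k))‖ + 1) ^ 2 ≤ T := fun k hk =>
    Finset.single_le_sum (f := fun k => (‖K (S (b k))‖ + 1) ^ 2) (fun _ _ => by positivity)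
      (Finset.mem_range.2 hk)
  obtain ⟨η, hη0, hη⟩ : ∃ η : ℝ, 0 < η ∧ N * (2 * (η ^ 2 * T)) < δ ^ 2 / 4 := by
    have : Filter.Tendsto (fun η : ℝ => N * (2 * (η ^ 2 * T))) (nhdsWithin 0 (Set.Ioi 0))
        (nhds (N * (2 * (0 ^ 2 * T)))) :=
      ((by fun_prop : Continuous fun η : ℝ => N * (2 * (η ^ 2 * T))).tendsto 0).mono_left
        nhdsWithin_le_nhds
    have h1 := this.eventually_lt_const
      (show (N : ℝ) * (2 * (0 ^ 2 * T)) < δ ^ 2 / 4 by simp; positivity)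
    obtain ⟨η, h1, h2⟩ := (h1.and self_mem_nhdsWithin).exists
    exact ⟨η, h2, h1⟩
  have hh : ∀ k, ∃ x : H, ‖K (S (b k)) - S x‖ < ε / 2 := by
    intro k
    obtain ⟨_, ⟨x, rfl⟩, hx⟩ := Metric.mem_closure_iff.1 (hrange ⟨b k, rfl⟩) (ε / 2) (by positivity)
    exact ⟨x, by rwa [dist_eq_norm] at hx⟩
  choose h hh using hh
  obtain ⟨R, g, hg1, hg2⟩ := exists_g (fun i => b i) hb S hS N h η hη0 (ε / 2) (by positivity)
  have hgε : ∀ k < N, ‖K (S (b k)) - S (g k)‖ ≤ ε := by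
    intro k hk
    have : K (S (b k)) - S (g k) = (K (S (b k)) - S (h k)) - (S (g k) - S (h k)) := by abel
    rw [this]
    refine (norm_sub_le _ _).trans ?_
    linarith [hh k, hg1 k hk]
  have hgT : ∀ k < N, ‖S (g k)‖ ^ 2 ≤ T := by
    intro k hk
    refine le_trans ?_ (hTk k hk)
    gcongr
    have := norm_sub_norm_le (S (g k)) (K (S (b k)))
    rw [norm_sub_rev] at this
    linarith [hgε k hk]
  set G := Gop (fun i => b i) N (N + R) η g with hG
  have hfin : FiniteDimensional ℂ (LinearMap.range (G : H →ₗ[ℂ] H)) := Gop_fin _ _ _ _ _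
  refine ⟨G, hfin, nonDefective_of_idem G hfin (Gop_idem _ _ _ _ _ hg2), ?_⟩
  set f : ℕ → ℝ := fun i => ‖K (S (b i)) - S (G (b i))‖ ^ 2 with hf
  have hf0 : ∀ i, 0 ≤ f i := fun i => by positivity
  have hT0 : 0 ≤ T := Finset.sum_nonneg fun _ _ => by positivity
  set q : ℕ → ℝ := fun i => if i ∈ Finset.Ico R (R + N) then 2 * (η ^ 2 * T) else 0 with hq
  have hqs : HasSum q (N * (2 * (η ^ 2 * T))) := by
    have := hasSum_sum_of_ne_finset_zero (f := q) (L := .unconditional ℕ) (s := Finset.Ico R (R + N))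
      (fun i hi => if_neg hi)
    convert this using 1
    rw [Finset.sum_congr rfl (fun i hi => if_pos hi)]
    simp
  have hq0 : ∀ i, 0 ≤ q i := fun i => by simp only [hq]; split_ifs <;> positivity
  have hZN : Summable fun i => ‖K (S (b (i + N)))‖ ^ 2 :=
    (summable_nat_add_iff (f := fun i => ‖K (S (b i))‖ ^ 2) N).2 hZ
  have hfq : ∀ i, f (i + N) ≤ 2 * ‖K (S (b (i + N)))‖ ^ 2 + q i := by
    intro i
    by_cases hi : i ∈ Finset.Ico R (R + N)
    · obtain ⟨hi1, hi2⟩ := Finset.mem_Ico.1 hi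
      obtain ⟨k, rfl⟩ := Nat.exists_eq_add_of_le hi1
      have hk : k < N := by omega
      have e : G (b (R + k + N)) = (η : ℂ) • g k := by
        have : R + k + N = N + R + k := by omega
        rw [this]
        exact Gop_mid (fun i => b i) hb N (N + R) (by omega) η g k hk
      simp only [hf, hq, if_pos hi, e, map_smul]
      have h1 := norm_sub_le (K (S (b (R + k + N)))) ((η : ℂ) • S (g k))
      rw [norm_smul, Complex.norm_real, Real.norm_of_nonneg hη0.le] at h1
      have h2 := mul_le_mul_of_nonneg_left (hgT k hk) (sq_nonneg η)
      have h3 := pow_le_pow_left₀ (norm_nonneg _) h1 2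
      have h4 := sq_nonneg (‖K (S (b (R + k + N)))‖ - η * ‖S (g k)‖)
      nlinarith
    · have e : G (b (i + N)) = 0 := by
        rw [Finset.mem_Ico] at hi
        exact Gop_other (fun i => b i) hb N (N + R) η g (i + N) (by omega) (by omega)
      simp only [hf, e, map_zero, sub_zero]
      have := hq0 i
      nlinarith [sq_nonneg ‖K (S (b (i + N)))‖]
  have hsum := (hZN.mul_left 2).add hqs.summable
  have hfN : Summable fun i => f (i + N) :=
    Summable.of_nonneg_of_le (fun i => hf0 _) hfq hsum
  have hfs : Summable f := (summable_nat_add_iff N).1 hfN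
  refine ⟨hfs, ?_⟩
  rw [Real.sqrt_lt' hδ, ← hfs.sum_add_tsum_nat_add N]
  have h1 : ∑ i ∈ Finset.range N, f i ≤ N * ε ^ 2 := by
    calc _ ≤ ∑ i ∈ Finset.range N, ε ^ 2 := by
          refine Finset.sum_le_sum fun i hi => ?_
          have hi := Finset.mem_range.1 hi
          have e : G (b i) = g i := Gop_lt (fun i => b i) hb N (N + R) (by omega) η g i hi
          simp only [hf, e]
          exact pow_le_pow_left₀ (norm_nonneg _) (hgε i hi) 2
      _ = _ := by simp
  have h2 := hfN.tsum_le_tsum hfq hsum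
  rw [(hZN.mul_left 2).tsum_add hqs.summable, hqs.tsum_eq, tsum_mul_left] at h2
  have : 0 < δ ^ 2 := by positivity
  linarith
end
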